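/- arXiv:1002.2762 — 2 statements merged into one kernel-verified Lean document; each statement's English description precedes it below -/
import Mathlib

section
/- In U the straightening relation v₀v₃ = q⁻²v₃v₀ + (q⁻⁴ − 1)v₂v₁ holds. -/
noncomputable section

abbrev F : Type := RatFunc ℚ

/-- The deformation parameter `q`. -/
def qq : F := RatFunc.X

/-- The quantum integer `[3] = q² + 1 + q⁻²`. -/
def box3 : F := qq ^ 2 + 1 + (qq⁻¹) ^ 2

/-- The generators `E₁, E₂` of the free algebra. -/
def gen (i : Fin 2) : FreeAlgebra F (Fin 2) := FreeAlgebra.ι F i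

/-- The quantized Serre relations. -/
inductive SerreRel : FreeAlgebra F (Fin 2) → FreeAlgebra F (Fin 2) → Prop
  | rel1 : SerreRel
      (gen 0 ^ 3 * gen 1 - box3 • (gen 0 ^ 2 * gen 1 * gen 0)
        + box3 • (gen 0 * gen 1 * gen 0 ^ 2) - gen 1 * gen 0 ^ 3) 0
  | rel2 : SerreRel
      (gen 1 ^ 3 * gen 0 - box3 • (gen 1 ^ 2 * gen 0 * gen 1)
        + box3 • (gen 1 * gen 0 * gen 1 ^ 2) - gen 0 * gen 1 ^ 3) 0

/-- `U = U_q(𝔫)`, the free algebra on `E₁, E₂` modulo the quantized Serre relations. -/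
abbrev U : Type := RingQuot SerreRel

def E1 : U := RingQuot.mkAlgHom F SerreRel (gen 0)
def E2 : U := RingQuot.mkAlgHom F SerreRel (gen 1)

/-- `A = (1/(q+q⁻¹))(E₂E₁ − q⁻²E₁E₂)`. -/
def Aelt : U := (qq + qq⁻¹)⁻¹ • (E2 * E1 - (qq⁻¹) ^ 2 • (E1 * E2))

def v0 : U := E1
def v1 : U := Aelt * v0 - v0 * Aelt
def v2 : U := Aelt * v1 - v1 * Aelt
def v3 : U := Aelt * v2 - v2 * Aelt

/-- `uᵢ = (1 − q⁻²)⁻²ⁱ vᵢ`. -/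
def u0 : U := v0
def u1 : U := ((1 - (qq⁻¹) ^ 2)⁻¹) ^ 2 • v1
def u2 : U := ((1 - (qq⁻¹) ^ 2)⁻¹) ^ 4 • v2
def u3 : U := ((1 - (qq⁻¹) ^ 2)⁻¹) ^ 6 • v3

/-- `p₁ = u₃u₁ − q²u₂²`. -/
def p1 : U := u3 * u1 - qq ^ 2 • u2 ^ 2
/-- `p₀ = u₂u₀ − q²u₁²`. -/
def p0 : U := u2 * u0 - qq ^ 2 • u1 ^ 2

/-!
Put `a = q⁻²` and `B = yx − a xy` with `x = E₁`, `y = E₂`, so that `A` is a multiple of `B`. The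
first Serre relation says `x⁅B, x⁆ = a ⁅B, x⁆x`. Applying the derivation `⁅B, ·⁆` to it twice gives
the claim once `⁅B, x⁆` and `⁅B, ⁅B, x⁆⁆` are known to commute up to the factor `a`. For the latter,
find `Q` commuting with `B` such that `⁅Q, x⁆ = B⁅B, x⁆` and apply `⁅Q, ·⁆` to the same relation.
Such a `Q` is a combination of `B²` and `P = y⁅B, x⁆ − a ⁅B, x⁆y`, and `P` commutes with `B`
because both Serre relations together yield `(a⁻¹ + 1 + a)⁅P, B⁆ = 0`.
-/

attribute [local instance] LieRing.ofAssociativeRing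

section Commutator

variable {R : Type*} [Ring R]

theorem lie_mul_leibniz (D x y : R) : ⁅D, x * y⁆ = ⁅D, x⁆ * y + x * ⁅D, y⁆ := by
  simp only [Ring.lie_def]
  noncomm_ring

theorem mul_lie_leibniz (x y D : R) : ⁅x * y, D⁆ = x * ⁅y, D⁆ + ⁅x, D⁆ * y := by
  simp only [Ring.lie_def]
  noncomm_ring

variable {K : Type*} [CommRing K] [Algebra K R] {a : K} {B Q x : R}

theorem mul_lie_lie_of_mul_lie (hx : x * ⁅B, x⁆ = a • (⁅B, x⁆ * x)) :
    x * ⁅B, ⁅B, x⁆⁆ = a • (⁅B, ⁅B, x⁆⁆ * x) + (a - 1) • (⁅B, x⁆ * ⁅B, x⁆) := by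
  have hB := congrArg (⁅B, ·⁆) hx
  simp only [LieAlgebra.lie_smul, lie_mul_leibniz] at hB
  linear_combination (norm := module) hB

/-- Apply `⁅Q, ·⁆` to `hx` and move `B` to the left: the terms with a factor `B` cancel by
`mul_lie_lie_of_mul_lie`, and the claim is what remains. -/
theorem lie_mul_lie_lie_of_commute (hBQ : Commute B Q) (hQ : ⁅Q, x⁆ = B * ⁅B, x⁆)
    (hx : x * ⁅B, x⁆ = a • (⁅B, x⁆ * x)) :
    ⁅B, x⁆ * ⁅B, ⁅B, x⁆⁆ = a • (⁅B, ⁅B, x⁆⁆ * ⁅B, x⁆) := by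
  have hQv : ⁅Q, ⁅B, x⁆⁆ = B * ⁅B, ⁅B, x⁆⁆ := by
    rw [leibniz_lie, hBQ.symm.lie_eq, zero_lie, zero_add, hQ, lie_mul_leibniz, lie_self, zero_mul,
      zero_add]
  have hQx := congrArg (⁅Q, ·⁆) hx
  have hBx := congrArg (B * ·) (mul_lie_lie_of_mul_lie hx)
  simp only [LieAlgebra.lie_smul, lie_mul_leibniz, hQv, hQ] at hQx
  have hxB : x * B = B * x - ⁅B, x⁆ := by rw [Ring.lie_def]; abel
  have hvB : ⁅B, x⁆ * B = B * ⁅B, x⁆ - ⁅B, ⁅B, x⁆⁆ := by rw [Ring.lie_def B ⁅B, x⁆]; abel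
  simp only [← mul_assoc, hxB, hvB, sub_mul] at hQx
  simp only [mul_add, mul_smul_comm, ← mul_assoc] at hBx
  linear_combination (norm := module) hBx - hQx

theorem mul_lie_lie_lie_of_commute (hBQ : Commute B Q) (hQ : ⁅Q, x⁆ = B * ⁅B, x⁆)
    (hx : x * ⁅B, x⁆ = a • (⁅B, x⁆ * x)) :
    x * ⁅B, ⁅B, ⁅B, x⁆⁆⁆ =
      a • (⁅B, ⁅B, ⁅B, x⁆⁆⁆ * x) + (a ^ 2 - 1) • (⁅B, ⁅B, x⁆⁆ * ⁅B, x⁆) := by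
  have hBB := congrArg (⁅B, ·⁆) (mul_lie_lie_of_mul_lie hx)
  simp only [lie_add, LieAlgebra.lie_smul, lie_mul_leibniz] at hBB
  linear_combination (norm := module) hBB + (a - 2) • lie_mul_lie_lie_of_commute hBQ hQ hx

end Commutator

/-- The `a`-deformed commutator `yx − a xy`, bilinear in `y` and `x`; at `a = q⁻²` and `y = E₂`,
`x = E₁` it is the element `A` of `U` up to a scalar. -/
def qBracket {K R : Type*} [CommRing K] [Ring R] [Algebra K R] (a : K) : R →ₗ[K] R →ₗ[K] R :=
  LinearMap.mul K R - a • (LinearMap.mul K R).flip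

section QBracket

variable {K R : Type*} [CommRing K] [Ring R] [Algebra K R] (a : K)

theorem qBracket_apply (y x : R) : qBracket a y x = y * x - a • (x * y) :=
  rfl

theorem lie_qBracket (D y x : R) :
    ⁅D, qBracket a y x⁆ = qBracket a ⁅D, y⁆ x + qBracket a y ⁅D, x⁆ := by
  simp only [qBracket_apply, lie_sub, LieAlgebra.lie_smul, lie_mul_leibniz]
  module

theorem qBracket_lie_left_eq_lie_right (y x : R) :
    qBracket a ⁅y, qBracket a y x⁆ x = qBracket a y ⁅qBracket a y x, x⁆ := by
  have h := lie_qBracket a (qBracket a y x) y x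
  rw [lie_self, ← lie_skew, map_neg, LinearMap.neg_apply] at h
  exact neg_add_eq_zero.mp h.symm

theorem qBracket_mul_left (y z x : R) :
    qBracket a (y * z) x = y * ⁅z, x⁆ + qBracket a y x * z := by
  simp only [qBracket_apply, Ring.lie_def, mul_sub, sub_mul, smul_mul_assoc, mul_assoc]
  module

theorem qBracket_mul_left' (y z x : R) :
    qBracket a (y * z) x = y * qBracket a z x + a • (⁅y, x⁆ * z) := by
  simp only [qBracket_apply, Ring.lie_def, mul_sub, sub_mul, mul_smul_comm, mul_assoc]
  module

theorem qBracket_mul_right (y x z : R) :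
    qBracket a y (x * z) = ⁅y, x⁆ * z + x * qBracket a y z := by
  simp only [qBracket_apply, Ring.lie_def, mul_sub, sub_mul, mul_smul_comm, mul_assoc]
  module

theorem qBracket_mul_right' (y x z : R) :
    qBracket a y (x * z) = qBracket a y x * z + a • (x * ⁅y, z⁆) := by
  simp only [qBracket_apply, Ring.lie_def, mul_sub, sub_mul, smul_mul_assoc, mul_assoc]
  module

end QBracket

/-- The left side of the quantized Serre relation with `a = q⁻²`, so that `[3] = a⁻¹ + 1 + a`. -/
def qSerre {K R : Type*} [Field K] [Ring R] [Algebra K R] (a : K) (x y : R) : R :=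
  x ^ 3 * y - (a⁻¹ + 1 + a) • (x ^ 2 * y * x) + (a⁻¹ + 1 + a) • (x * y * x ^ 2) - y * x ^ 3

section Serre

variable {K R : Type*} [Field K] [Ring R] [Algebra K R] {a : K} {x y v w : R}

theorem mul_qBracket_lie_of_qSerre (ha : a ≠ 0) (h : qSerre a x y = 0) :
    x * ⁅qBracket a y x, x⁆ = a • (⁅qBracket a y x, x⁆ * x) := by
  rw [← sub_eq_zero]
  calc x * ⁅qBracket a y x, x⁆ - a • (⁅qBracket a y x, x⁆ * x) = a • qSerre a x y := by
        simp only [qSerre, qBracket_apply, Ring.lie_def, pow_succ, pow_zero, one_mul, mul_sub,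
          sub_mul, mul_smul_comm, smul_mul_assoc, mul_assoc]
        match_scalars <;> field
    _ = 0 := by rw [h, smul_zero]

theorem mul_lie_qBracket_of_qSerre (ha : a ≠ 0) (h : qSerre a y x = 0) :
    y * ⁅y, qBracket a y x⁆ = a⁻¹ • (⁅y, qBracket a y x⁆ * y) := by
  rw [← sub_eq_zero]
  calc y * ⁅y, qBracket a y x⁆ - a⁻¹ • (⁅y, qBracket a y x⁆ * y) = qSerre a y x := by
        simp only [qSerre, qBracket_apply, Ring.lie_def, pow_succ, pow_zero, one_mul, mul_sub,
          sub_mul, mul_smul_comm, smul_mul_assoc, mul_assoc]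
        match_scalars <;> field
    _ = 0 := h

theorem qBracket_lie_of_mul_eq_smul (ha : a ≠ 0) (hv : x * v = a • (v * x)) :
    ⁅qBracket a y v, x⁆ = a⁻¹ • (qBracket a y x * v) - a • (v * qBracket a y x) := by
  have hvx : v * x = a⁻¹ • (x * v) := by rw [hv, inv_smul_smul₀ ha]
  have hyvx : y * (v * x) = a⁻¹ • (y * (x * v)) := by rw [hvx, mul_smul_comm]
  have hxvy : x * (v * y) = a • (v * (x * y)) := by
    rw [← mul_assoc, hv, smul_mul_assoc, mul_assoc]
  simp only [qBracket_apply, Ring.lie_def, mul_sub, sub_mul, smul_mul_assoc, mul_smul_comm,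
    mul_assoc, hyvx, hxvy]
  match_scalars <;> field

theorem lie_qBracket_of_mul_eq_smul (ha : a ≠ 0) (hw : y * w = a⁻¹ • (w * y)) :
    ⁅y, qBracket a w x⁆ = a⁻¹ • (w * qBracket a y x) - a • (qBracket a y x * w) := by
  have hwy : w * y = a • (y * w) := by rw [hw, smul_inv_smul₀ ha]
  have hywx : y * (w * x) = a⁻¹ • (w * (y * x)) := by
    rw [← mul_assoc, hw, smul_mul_assoc, mul_assoc]
  have hxwy : x * (w * y) = a • (x * (y * w)) := by rw [hwy, mul_smul_comm]
  simp only [qBracket_apply, Ring.lie_def, mul_sub, sub_mul, smul_mul_assoc, mul_smul_comm,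
    mul_assoc, hywx, hxwy]
  match_scalars <;> field

/-- Write `B` and `P` for the two elements. Expanding `⁅P, B⁆` by the Leibniz rule in both entries
of `B = qBracket a y x` gives `−(a⁻¹ + a)⁅P, B⁆`. -/
theorem commute_qBracket_qBracket_lie (ha : a ≠ 0) (hthree : a⁻¹ + 1 + a ≠ 0)
    (hxy : qSerre a x y = 0) (hyx : qSerre a y x = 0) :
    Commute (qBracket a y x) (qBracket a y ⁅qBracket a y x, x⁆) := by
  have hw := qBracket_lie_left_eq_lie_right a y x
  have hPx := qBracket_lie_of_mul_eq_smul (y := y) ha (mul_qBracket_lie_of_qSerre ha hxy)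
  have hyP := lie_qBracket_of_mul_eq_smul (x := x) ha (mul_lie_qBracket_of_qSerre ha hyx)
  have hPB := lie_qBracket a (qBracket a y ⁅qBracket a y x, x⁆) y x
  rw [hw] at hyP
  rw [hPx, ← lie_skew _ y, hyP] at hPB
  generalize qBracket a y x = B at *
  generalize hP : qBracket a y ⁅B, x⁆ = P at *
  simp only [map_neg, map_sub, map_smul, LinearMap.neg_apply, LinearMap.sub_apply,
    LinearMap.smul_apply] at hPB
  rw [qBracket_mul_left a ⁅y, B⁆ B, qBracket_mul_left' a B ⁅y, B⁆, qBracket_mul_right a y B ⁅B, x⁆,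
    qBracket_mul_right' a y ⁅B, x⁆ B, hw, hP] at hPB
  have h : (a⁻¹ + 1 + a) • ⁅P, B⁆ = 0 := by
    rw [Ring.lie_def] at hPB ⊢
    linear_combination (norm := module) hPB
  exact (commute_iff_lie_eq.mpr ((smul_eq_zero.mp h).resolve_left hthree)).symm

theorem exists_commute_qBracket_lie_eq_mul_lie (hsum : a⁻¹ + a ≠ 0) (hthree : a⁻¹ + 1 + a ≠ 0)
    (hxy : qSerre a x y = 0) (hyx : qSerre a y x = 0) :
    ∃ Q : R, Commute (qBracket a y x) Q ∧ ⁅Q, x⁆ = qBracket a y x * ⁅qBracket a y x, x⁆ := by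
  have ha : a ≠ 0 := by rintro rfl; simp at hsum
  have hBP := commute_qBracket_qBracket_lie ha hthree hxy hyx
  have hPx := qBracket_lie_of_mul_eq_smul (y := y) ha (mul_qBracket_lie_of_qSerre ha hxy)
  generalize qBracket a y x = B at *
  generalize qBracket a y ⁅B, x⁆ = P at *
  -- `hPx` reads `⁅P, x⁆ = a⁻¹ B⁅B, x⁆ − a ⁅B, x⁆B`; adding `a B²` to `P` cancels the last term.
  refine ⟨(a⁻¹ + a)⁻¹ • (P + a • (B * B)), ?_, ?_⟩
  · exact (hBP.add_right (((Commute.refl B).mul_right (Commute.refl B)).smul_right a)).smul_right _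
  · have hQx : ⁅P + a • (B * B), x⁆ = (a⁻¹ + a) • (B * ⁅B, x⁆) := by
      rw [add_lie, smul_lie a (B * B) x, hPx, mul_lie_leibniz]
      module
    rw [smul_lie (a⁻¹ + a)⁻¹ (P + a • (B * B)) x, hQx, inv_smul_smul₀ hsum]

theorem stmt2_general (hsum : a⁻¹ + a ≠ 0) (hthree : a⁻¹ + 1 + a ≠ 0)
    (hxy : qSerre a x y = 0) (hyx : qSerre a y x = 0) (c : K) {A : R}
    (hA : A = c • qBracket a y x) :
    x * ⁅A, ⁅A, ⁅A, x⁆⁆⁆ =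
      a • (⁅A, ⁅A, ⁅A, x⁆⁆⁆ * x) + (a ^ 2 - 1) • (⁅A, ⁅A, x⁆⁆ * ⁅A, x⁆) := by
  have ha : a ≠ 0 := by rintro rfl; simp at hsum
  obtain ⟨Q, hBQ, hQ⟩ := exists_commute_qBracket_lie_eq_mul_lie hsum hthree hxy hyx
  have h := mul_lie_lie_lie_of_commute hBQ hQ (mul_qBracket_lie_of_qSerre ha hxy)
  have hA' (z : R) : ⁅A, z⁆ = c • ⁅qBracket a y x, z⁆ := by rw [hA]; exact smul_lie ..
  simp only [hA', LieAlgebra.lie_smul, smul_mul_assoc, mul_smul_comm, h]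
  module

end Serre

section RootOfUnity

variable {K : Type*} [Field K] {a : K}

theorem inv_add_self_ne_zero_of_pow_ne_one (ha : a ≠ 0) (h : a ^ 4 ≠ 1) : a⁻¹ + a ≠ 0 := by
  intro hsum
  field_simp at hsum
  exact h (by linear_combination (a ^ 2 - 1) * hsum)

theorem inv_add_one_add_self_ne_zero_of_pow_ne_one (ha : a ≠ 0) (h : a ^ 3 ≠ 1) :
    a⁻¹ + 1 + a ≠ 0 := by
  intro hthree
  field_simp at hthree
  exact h (by linear_combination (a - 1) * hthree)

end RootOfUnity

theorem ratFunc_X_pow_ne_one {K : Type*} [Field K] {n : ℕ} (hn : n ≠ 0) :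
    (RatFunc.X : RatFunc K) ^ n ≠ 1 := by
  intro h
  have halg : IsAlgebraic K ((RatFunc.X : RatFunc K) ^ n) := h ▸ isAlgebraic_one
  exact RatFunc.transcendental_X (halg.of_pow hn.bot_lt)

theorem qq_inv_sq_pow_ne_one {n : ℕ} (hn : n ≠ 0) : (qq⁻¹ ^ 2) ^ n ≠ 1 := by
  rw [← pow_mul, inv_pow, inv_ne_one]
  exact ratFunc_X_pow_ne_one (mul_ne_zero two_ne_zero hn)

theorem qq_inv_sq_ne_zero : qq⁻¹ ^ 2 ≠ 0 :=
  pow_ne_zero 2 (inv_ne_zero RatFunc.X_ne_zero)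

theorem qq_zpow_neg_two : qq ^ (-2 : ℤ) = qq⁻¹ ^ 2 := by
  rw [zpow_neg, inv_pow]; rfl

theorem qq_zpow_neg_four : qq ^ (-4 : ℤ) = (qq⁻¹ ^ 2) ^ 2 := by
  rw [zpow_neg, ← pow_mul, inv_pow]; rfl

theorem qSerre_E1_E2 : qSerre (qq⁻¹ ^ 2) E1 E2 = 0 := by
  have h := RingQuot.mkAlgHom_rel F SerreRel.rel1
  simpa only [map_sub, map_add, map_mul, map_pow, map_smul, map_zero, box3, qSerre, E1, E2,
    inv_pow, inv_inv] using h

theorem qSerre_E2_E1 : qSerre (qq⁻¹ ^ 2) E2 E1 = 0 := by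
  have h := RingQuot.mkAlgHom_rel F SerreRel.rel2
  simpa only [map_sub, map_add, map_mul, map_pow, map_smul, map_zero, box3, qSerre, E1, E2,
    inv_pow, inv_inv] using h

/-- In `U` the straightening relation `v₀v₃ = q⁻²v₃v₀ + (q⁻⁴ − 1)v₂v₁` holds. -/
theorem stmt2 :
    v0 * v3 = qq ^ (-2 : ℤ) • (v3 * v0) + (qq ^ (-4 : ℤ) - 1) • (v2 * v1) := by
  rw [qq_zpow_neg_two, qq_zpow_neg_four]
  exact stmt2_general
    (inv_add_self_ne_zero_of_pow_ne_one qq_inv_sq_ne_zero (qq_inv_sq_pow_ne_one four_ne_zero))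
    (inv_add_one_add_self_ne_zero_of_pow_ne_one qq_inv_sq_ne_zero
      (qq_inv_sq_pow_ne_one three_ne_zero))
    qSerre_E1_E2 qSerre_E2_E1 (qq + qq⁻¹)⁻¹ rfl
end
end

section
/- In U, for every natural number k the power expansions p₁^k = Σ_{i=0}^{k} (−1)^i q^{2i² − ik − k² + i + k} [k;i] u₃^{k−i}u₂^{2i}u₁^{k−i} and p₀^k = Σ_{i=0}^{k} (−1)^i q^{2i² − ik − k² + i + k} [k;i] u₂^{k−i}u₁^{2i}u₀^{k−i} hold, where [k;i] denotes the quantum binomial coefficient. -/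
noncomputable section

/-- The quantum integer `[m] = (q^m − q^{−m})/(q − q⁻¹)`. -/
def qint (m : ℤ) : F := (qq ^ m - qq ^ (-m)) / (qq - qq⁻¹)

/-- The quantized factorial `[i]! = [i][i−1]⋯[1]`. -/
def qfact (i : ℕ) : F := ∏ j ∈ Finset.range i, qint ((j : ℤ) + 1)

/-- The quantum binomial coefficient `[m; i] = [m][m−1]⋯[m−i+1]/[i]!`. -/
def qbinom (m : ℤ) (i : ℕ) : F := (∏ j ∈ Finset.range i, qint (m - j)) / qfact i

/-!
The elements `uₙ = ad(A)ⁿ E₁`, suitably rescaled, are real root vectors of quantum affine `sl₂`, and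
`A` is an imaginary one. The Serre relations give `u₁ u₀ = q² u₀ u₁` and produce a second imaginary
root vector `C` that commutes with `A` and satisfies `[C, uₙ] = uₙ₊₂`. Applying the derivations
`[A, ·]` and `[C, ·]` to the first relation propagates it to the quadratic relations among
`uₙ, uₙ₊₁, uₙ₊₂` for all `n`. From these, `p = uₙ₊₂ uₙ - q² uₙ₊₁²` satisfies `p uₙ₊₂ = q⁻² uₙ₊₂ p`,
so left multiplication by `p` sends each ordered monomial of the expansion of `p ^ k` to a
combination of two ordered monomials, and comparing coefficients amounts to the `q`-Pascal rule.
-/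

attribute [local instance] LieRing.ofAssociativeRing

section Brackets

variable {K S : Type*} [CommRing K] [Ring S] [Algebra K S]

/-- The `t`-commutator `a b - t b a`. -/
def qComm (t : K) (a b : S) : S := a * b - t • (b * a)

theorem lie_mul_eq_add (a b c : S) : ⁅a, b * c⁆ = ⁅a, b⁆ * c + b * ⁅a, c⁆ := by
  simp only [Ring.lie_def]
  noncomm_ring

theorem lie_qComm (t : K) (a b c : S) : ⁅a, qComm t b c⁆ = qComm t ⁅a, b⁆ c + qComm t b ⁅a, c⁆ := by
  simp only [qComm, lie_sub, LieAlgebra.lie_smul, lie_mul_eq_add, smul_add]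
  abel

theorem mul_pow_of_qComm_eq_zero {t : K} {a b : S} (h : qComm t a b = 0) (n : ℕ) :
    a * b ^ n = t ^ n • (b ^ n * a) := by
  have hsemi : SemiconjBy a b (t • b) := by
    rw [SemiconjBy, smul_mul_assoc]
    exact sub_eq_zero.mp h
  simpa only [SemiconjBy, smul_pow, smul_mul_assoc] using hsemi.pow_right n

/-- The iterated bracket `ad(a)ⁿ x`. -/
def iterBracket (a x : S) (n : ℕ) : S := (⁅a, ·⁆)^[n] x

theorem lie_iterBracket (a x : S) (n : ℕ) : ⁅a, iterBracket a x n⁆ = iterBracket a x (n + 1) :=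
  (Function.iterate_succ_apply' _ n x).symm

theorem iterBracket_smul (l : K) (a x : S) (n : ℕ) :
    iterBracket (l • a) x n = l ^ n • iterBracket a x n := by
  induction n with
  | zero => simp [iterBracket]
  | succ n ih => rw [← lie_iterBracket, ih, smul_lie, LieAlgebra.lie_smul,
      lie_iterBracket, smul_smul, pow_succ']

theorem lie_iterBracket_of_lie_eq_zero {a c x : S} {d : ℕ} (hca : ⁅c, a⁆ = 0)
    (hcx : ⁅c, x⁆ = iterBracket a x d) (n : ℕ) :
    ⁅c, iterBracket a x n⁆ = iterBracket a x (n + d) := by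
  have hcomm : Function.Commute (⁅c, ·⁆) (⁅a, ·⁆ : S → S) := fun y => by
    simp only [leibniz_lie c a y, hca, zero_lie, zero_add]
  rw [iterBracket, (hcomm.iterate_right n).eq, hcx, iterBracket, iterBracket,
    Function.iterate_add_apply]

end Brackets

section CurrentRelations

theorem eq_zero_of_add_self_eq_zero {M : Type*} [AddMonoid M] [IsAddTorsionFree M] {x : M}
    (h : x + x = 0) : x = 0 :=
  (nsmul_eq_zero_iff_right two_ne_zero).mp ((two_nsmul x).trans h)

variable {K S : Type*} [CommRing K] [Ring S] [Algebra K S]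

/-- The left-hand side of the Drinfeld quadratic relation
`u_{m+1} u_n - t u_n u_{m+1} + u_{n+1} u_m - t u_m u_{n+1} = 0` between the terms of `u`. -/
def currentRel (t : K) (u : ℕ → S) (m n : ℕ) : S :=
  qComm t (u (m + 1)) (u n) + qComm t (u (n + 1)) (u m)

variable {t : K} {u : ℕ → S} {a c : S}

theorem currentRel_comm (t : K) (u : ℕ → S) (m n : ℕ) : currentRel t u m n = currentRel t u n m :=
  add_comm _ _

theorem lie_currentRel {d : ℕ} (ha : ∀ n, ⁅a, u n⁆ = u (n + d)) (m n : ℕ) :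
    ⁅a, currentRel t u m n⁆ = currentRel t u (m + d) n + currentRel t u m (n + d) := by
  simp only [currentRel, lie_add, lie_qComm, ha, add_right_comm _ 1 d]
  abel

theorem qComm_add_two_of_currentRel_eq_zero {m : ℕ} (h : currentRel t u (m + 1) m = 0) :
    qComm t (u (m + 2)) (u m) = (t - 1) • u (m + 1) ^ 2 := by
  rw [← sub_eq_zero, ← h, currentRel, qComm, qComm, sub_smul, one_smul, sq]
  abel

variable [IsAddTorsionFree S]

theorem qComm_succ_of_currentRel_eq_zero {m : ℕ} (h : currentRel t u m m = 0) :
    qComm t (u (m + 1)) (u m) = 0 :=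
  eq_zero_of_add_self_eq_zero h

theorem currentRel_add_self_eq_zero {d m : ℕ} (ha : ∀ n, ⁅a, u n⁆ = u (n + d))
    (h : currentRel t u m m = 0) : currentRel t u (m + d) m = 0 := by
  apply eq_zero_of_add_self_eq_zero
  nth_rw 2 [currentRel_comm]
  rw [← lie_currentRel ha, h, lie_zero]

theorem currentRel_self_eq_zero (ha : ∀ n, ⁅a, u n⁆ = u (n + 1)) (hc : ∀ n, ⁅c, u n⁆ = u (n + 2))
    (h₀ : qComm t (u 1) (u 0) = 0) (m : ℕ) : currentRel t u m m = 0 := by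
  induction m with
  | zero => rw [currentRel, h₀, add_zero]
  | succ m ih =>
    have hlie := lie_currentRel (t := t) ha (m + 1) m
    rwa [currentRel_add_self_eq_zero ha ih, currentRel_add_self_eq_zero hc ih, lie_zero, zero_add,
      eq_comm] at hlie

end CurrentRelations

section Serre

variable {K S : Type*} [Field K] [Ring S] [Algebra K S]

/-- The quantized Serre relation of affine type `A₁⁽¹⁾`, written in terms of `t = q²`, so that
`[3] = t + 1 + t⁻¹`. -/
def QuantumSerre (t : K) (x y : S) : Prop :=
  x ^ 3 * y - (t + 1 + t⁻¹) • (x ^ 2 * y * x) + (t + 1 + t⁻¹) • (x * y * x ^ 2) - y * x ^ 3 = 0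

/-- The imaginary root vector of weight `δ = α₁ + α₂`, up to a scalar. -/
def imagRootVec (t : K) (x y : S) : S := qComm t⁻¹ y x

/-- The imaginary root vector of weight `2δ`, up to a scalar. The multiple of `b ^ 2`, where
`b = imagRootVec t x y`, is chosen so that bracketing with `x` gives a multiple of `⁅b, ⁅b, x⁆⁆`. -/
def imagRootVecTwo (t : K) (x y : S) : S :=
  (2 : K) • qComm t⁻¹ y ⁅imagRootVec t x y, x⁆ - (t - t⁻¹) • imagRootVec t x y ^ 2

variable {t : K} {x y : S}

theorem QuantumSerre.qComm_lie_imagRootVec (ht : t ≠ 0) (h : QuantumSerre t x y) :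
    qComm t ⁅imagRootVec t x y, x⁆ x = 0 := by
  rw [← neg_eq_zero, ← h]
  simp only [imagRootVec, qComm, Ring.lie_def, pow_succ, pow_zero, one_mul, mul_sub, sub_mul,
    mul_smul_comm, smul_mul_assoc, smul_sub, mul_assoc]
  match_scalars <;> field_simp <;> ring

theorem QuantumSerre.qComm_lie_imagRootVec_symm (ht : t ≠ 0) (h : QuantumSerre t y x) :
    qComm t y ⁅y, imagRootVec t x y⁆ = 0 := by
  rw [← h]
  simp only [imagRootVec, qComm, Ring.lie_def, pow_succ, pow_zero, one_mul, mul_sub, sub_mul,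
    mul_smul_comm, smul_mul_assoc, smul_sub, mul_assoc]
  match_scalars <;> field_simp <;> ring

/- The anti-automorphism exchanging `x` and `y` fixes `imagRootVec t x y` and swaps the two
sides. -/
theorem qComm_lie_imagRootVec_left_eq_right (t : K) (x y : S) :
    qComm t⁻¹ y ⁅imagRootVec t x y, x⁆ = qComm t⁻¹ ⁅y, imagRootVec t x y⁆ x := by
  generalize hb : imagRootVec t x y = b
  have hself : qComm t⁻¹ y x * b = b * qComm t⁻¹ y x := by rw [← hb, imagRootVec]
  rw [← sub_eq_zero, ← sub_eq_zero.mpr hself.symm]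
  simp only [qComm, Ring.lie_def, mul_sub, sub_mul, mul_smul_comm, smul_mul_assoc, smul_sub,
    mul_assoc]
  abel

theorem lie_qComm_left (ht : t ≠ 0) {w : S} (h : qComm t w x = 0) :
    ⁅qComm t⁻¹ y w, x⁆ = t • (imagRootVec t x y * w) - t⁻¹ • (w * imagRootVec t x y) := by
  have hwx : w * x = t • (x * w) := sub_eq_zero.mp h
  have hxw : x * w = t⁻¹ • (w * x) := by rw [hwx, inv_smul_smul₀ ht]
  calc ⁅qComm t⁻¹ y w, x⁆
      = y * (w * x) - t⁻¹ • (w * (y * x)) - (x * (y * w) - t⁻¹ • (x * w * y)) := by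
        simp only [qComm, Ring.lie_def, mul_sub, sub_mul, mul_smul_comm, smul_mul_assoc, mul_assoc]
    _ = y * (t • (x * w)) - t⁻¹ • (w * (y * x)) - (x * (y * w) - t⁻¹ • (t⁻¹ • (w * x) * y)) := by
        rw [← hwx, ← hxw]
    _ = t • (imagRootVec t x y * w) - t⁻¹ • (w * imagRootVec t x y) := by
        simp only [imagRootVec, qComm, mul_sub, sub_mul, mul_smul_comm, smul_mul_assoc, mul_assoc]
        match_scalars <;> field_simp

theorem lie_qComm_right (ht : t ≠ 0) {w : S} (h : qComm t y w = 0) :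
    ⁅qComm t⁻¹ w x, y⁆ = t⁻¹ • (imagRootVec t x y * w) - t • (w * imagRootVec t x y) := by
  have hyw : y * w = t • (w * y) := sub_eq_zero.mp h
  have hwy : w * y = t⁻¹ • (y * w) := by rw [hyw, inv_smul_smul₀ ht]
  calc ⁅qComm t⁻¹ w x, y⁆
      = w * (x * y) - t⁻¹ • (x * (w * y)) - (y * w * x - t⁻¹ • (y * (x * w))) := by
        simp only [qComm, Ring.lie_def, mul_sub, sub_mul, mul_smul_comm, smul_mul_assoc, mul_assoc]
    _ = w * (x * y) - t⁻¹ • (x * (t⁻¹ • (y * w))) - (t • (w * y) * x - t⁻¹ • (y * (x * w))) := by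
        rw [← hyw, ← hwy]
    _ = t⁻¹ • (imagRootVec t x y * w) - t • (w * imagRootVec t x y) := by
        simp only [imagRootVec, qComm, mul_sub, sub_mul, mul_smul_comm, smul_mul_assoc, mul_assoc]
        match_scalars <;> field_simp

theorem lie_imagRootVecTwo_left (ht : t ≠ 0) (h : QuantumSerre t x y) :
    ⁅imagRootVecTwo t x y, x⁆ = (t + t⁻¹) • ⁅imagRootVec t x y, ⁅imagRootVec t x y, x⁆⁆ := by
  have hD := lie_qComm_left (y := y) ht (h.qComm_lie_imagRootVec ht)
  rw [imagRootVecTwo, sub_lie, smul_lie, smul_lie, hD]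
  simp only [Ring.lie_def, sq, mul_sub, sub_mul, mul_assoc]
  module

theorem lie_imagRootVecTwo_right (ht : t ≠ 0) (h : QuantumSerre t y x) :
    ⁅imagRootVecTwo t x y, y⁆ = (t + t⁻¹) • ⁅imagRootVec t x y, ⁅y, imagRootVec t x y⁆⁆ := by
  have hD := lie_qComm_right (x := x) ht (h.qComm_lie_imagRootVec_symm ht)
  rw [imagRootVecTwo, qComm_lie_imagRootVec_left_eq_right, sub_lie, smul_lie, smul_lie, hD]
  simp only [Ring.lie_def, sq, mul_sub, sub_mul, mul_assoc]
  module

theorem lie_imagRootVec_imagRootVecTwo (t : K) (x y : S) :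
    ⁅imagRootVec t x y, imagRootVecTwo t x y⁆ =
      qComm t⁻¹ ⁅imagRootVec t x y, ⁅y, imagRootVec t x y⁆⁆ x +
        qComm t⁻¹ y ⁅imagRootVec t x y, ⁅imagRootVec t x y, x⁆⁆ := by
  have hsymm := congrArg (⁅imagRootVec t x y, ·⁆) (qComm_lie_imagRootVec_left_eq_right t x y)
  rw [imagRootVecTwo, lie_sub, LieAlgebra.lie_smul, LieAlgebra.lie_smul,
    (Commute.self_pow (imagRootVec t x y) 2).lie_eq, smul_zero, sub_zero, two_smul]
  nth_rw 1 [hsymm]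
  rw [lie_qComm, lie_qComm, ← lie_skew y (imagRootVec t x y)]
  simp only [qComm, neg_mul, mul_neg, smul_neg]
  abel

theorem lie_imagRootVecTwo_imagRootVec (ht : t ≠ 0) (ht₃ : t + 1 + t⁻¹ ≠ 0)
    (hxy : QuantumSerre t x y) (hyx : QuantumSerre t y x) :
    ⁅imagRootVecTwo t x y, imagRootVec t x y⁆ = 0 := by
  have hlie : ⁅imagRootVecTwo t x y, imagRootVec t x y⁆ =
      (t + t⁻¹) • ⁅imagRootVec t x y, imagRootVecTwo t x y⁆ := by
    conv_lhs => rw [imagRootVec, lie_qComm, lie_imagRootVecTwo_left ht hxy,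
      lie_imagRootVecTwo_right ht hyx]
    rw [lie_imagRootVec_imagRootVecTwo]
    simp only [qComm, mul_smul_comm, smul_mul_assoc]
    module
  rw [← lie_skew (imagRootVec t x y), smul_neg] at hlie
  refine (smul_eq_zero_iff_right ht₃).mp ?_
  rw [add_right_comm, add_smul, one_smul]
  exact add_eq_zero_iff_eq_neg'.mpr hlie

theorem exists_lie_eq_iterBracket_two (ht : t ≠ 0) (ht₂ : t + t⁻¹ ≠ 0) (ht₃ : t + 1 + t⁻¹ ≠ 0)
    (hxy : QuantumSerre t x y) (hyx : QuantumSerre t y x) (l : K) :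
    ∃ c : S, ⁅c, l • imagRootVec t x y⁆ = 0 ∧ ⁅c, x⁆ = iterBracket (l • imagRootVec t x y) x 2 := by
  refine ⟨(l ^ 2 * (t + t⁻¹)⁻¹) • imagRootVecTwo t x y, ?_, ?_⟩
  · rw [LieAlgebra.lie_smul, smul_lie, lie_imagRootVecTwo_imagRootVec ht ht₃ hxy hyx, smul_zero,
      smul_zero]
  · rw [iterBracket_smul, smul_lie, lie_imagRootVecTwo_left ht hxy, mul_smul, inv_smul_smul₀ ht₂]
    rfl

variable [IsAddTorsionFree S]

theorem currentRel_iterBracket_imagRootVec_eq_zero (ht : t ≠ 0) (ht₂ : t + t⁻¹ ≠ 0)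
    (ht₃ : t + 1 + t⁻¹ ≠ 0) (hxy : QuantumSerre t x y) (hyx : QuantumSerre t y x) (l : K) (n : ℕ) :
    currentRel t (iterBracket (l • imagRootVec t x y) x) n n = 0 := by
  obtain ⟨c, hca, hcx⟩ := exists_lie_eq_iterBracket_two ht ht₂ ht₃ hxy hyx l
  refine currentRel_self_eq_zero (lie_iterBracket _ x) (lie_iterBracket_of_lie_eq_zero hca hcx) ?_ n
  change qComm t ⁅l • imagRootVec t x y, x⁆ x = 0
  have hzero := hxy.qComm_lie_imagRootVec ht
  rw [qComm] at hzero ⊢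
  rw [smul_lie, smul_mul_assoc, mul_smul_comm, smul_comm t l, ← smul_sub, hzero, smul_zero]

end Serre

section PowerExpansion

variable {K S : Type*} [Field K] [Ring S] [Algebra K S] {t : K} {x y z : S}

theorem qComm_inv_of_qComm_eq_zero (ht : t ≠ 0) {a b : S} (h : qComm t a b = 0) :
    qComm t⁻¹ b a = 0 := by
  rw [qComm, sub_eq_zero] at h ⊢
  rw [h, inv_smul_smul₀ ht]

/-- The `t`-deformed discriminant `x z - t y²`, whose powers are to be expanded. -/
def qDiscriminant (t : K) (x y z : S) : S := x * z - t • y ^ 2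

theorem qComm_qDiscriminant (ht : t ≠ 0) (hxy : qComm t x y = 0)
    (hxz : qComm t x z = (t - 1) • y ^ 2) : qComm t⁻¹ (qDiscriminant t x y z) x = 0 := by
  have hxy₂ : x * y ^ 2 = t ^ 2 • (y ^ 2 * x) := mul_pow_of_qComm_eq_zero hxy 2
  have hzx : t • (z * x) = x * z - (t - 1) • y ^ 2 := by rw [← hxz, qComm, sub_sub_cancel]
  refine (smul_eq_zero_iff_right ht).mp ?_
  calc t • qComm t⁻¹ (qDiscriminant t x y z) x
      = x * (t • (z * x)) - t ^ 2 • (y ^ 2 * x) - x * (x * z - t • y ^ 2) := by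
        simp only [qComm, qDiscriminant, sub_mul, mul_sub, smul_mul_assoc, mul_smul_comm, mul_assoc]
        match_scalars <;> field_simp
    _ = 0 := by
        rw [hzx, ← hxy₂]
        simp only [mul_sub, mul_smul_comm]
        module

theorem qDiscriminant_mul_monomial (ht : t ≠ 0) (hyz : qComm t y z = 0) (hxy : qComm t x y = 0)
    (hxz : qComm t x z = (t - 1) • y ^ 2) (i m : ℕ) :
    qDiscriminant t x y z * (x ^ m * y ^ (2 * i) * z ^ m) =
      t⁻¹ ^ (m + 2 * i) • (x ^ (m + 1) * y ^ (2 * i) * z ^ (m + 1)) -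
        (t⁻¹ ^ m * t) • (x ^ m * y ^ (2 * (i + 1)) * z ^ m) := by
  have hpx := mul_pow_of_qComm_eq_zero (qComm_qDiscriminant ht hxy hxz) m
  have hzy := mul_pow_of_qComm_eq_zero (qComm_inv_of_qComm_eq_zero ht hyz) (2 * i)
  calc qDiscriminant t x y z * (x ^ m * y ^ (2 * i) * z ^ m)
      = t⁻¹ ^ m • (x ^ m * qDiscriminant t x y z) * (y ^ (2 * i) * z ^ m) := by
        rw [← hpx]
        simp only [mul_assoc]
    _ = t⁻¹ ^ m • (x ^ m * x * (z * y ^ (2 * i)) * z ^ m) -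
          (t⁻¹ ^ m * t) • (x ^ m * (y ^ 2 * y ^ (2 * i)) * z ^ m) := by
        simp only [qDiscriminant, mul_sub, sub_mul, smul_sub, mul_smul_comm, smul_mul_assoc,
          mul_smul, mul_assoc]
    _ = _ := by
        rw [hzy, ← pow_add, mul_add_one 2 i, add_comm (2 * i) 2, pow_succ x, pow_succ' z,
          pow_add t⁻¹]
        simp only [mul_smul_comm, smul_mul_assoc, mul_smul, mul_assoc]

theorem qDiscriminant_mul_monomial_of_le (ht : t ≠ 0) (hyz : qComm t y z = 0)
    (hxy : qComm t x y = 0) (hxz : qComm t x z = (t - 1) • y ^ 2) {i k : ℕ} (hik : i ≤ k) :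
    qDiscriminant t x y z * (x ^ (k - i) * y ^ (2 * i) * z ^ (k - i)) =
      t ^ (-((k : ℤ) + i)) • (x ^ (k + 1 - i) * y ^ (2 * i) * z ^ (k + 1 - i)) -
        t ^ ((i : ℤ) + 1 - k) • (x ^ (k - i) * y ^ (2 * (i + 1)) * z ^ (k - i)) := by
  have hfirst : t ^ (-((k : ℤ) + i)) = t⁻¹ ^ (k - i + 2 * i) := by
    rw [inv_pow, ← zpow_natCast, ← zpow_neg]
    congr 1
    push_cast [hik]
    ring
  have hsecond : t ^ ((i : ℤ) + 1 - k) = t⁻¹ ^ (k - i) * t := by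
    rw [inv_pow, ← zpow_natCast, ← zpow_neg, ← zpow_add_one₀ ht]
    congr 1
    push_cast [hik]
    ring
  rw [qDiscriminant_mul_monomial ht hyz hxy hxz, hfirst, hsecond, Nat.sub_add_comm hik]

theorem qDiscriminant_pow_of_recurrence {c : ℕ → ℕ → K} (hc₀ : c 0 0 = 1)
    (hc_top : ∀ k, c k (k + 1) = 0) (hc_zero : ∀ k, c (k + 1) 0 = t ^ (-(k : ℤ)) * c k 0)
    (hc_succ : ∀ k i, c (k + 1) (i + 1) =
      t ^ (-((k : ℤ) + (i + 1))) * c k (i + 1) - t ^ ((i : ℤ) + 1 - k) * c k i)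
    (ht : t ≠ 0) (hyz : qComm t y z = 0) (hxy : qComm t x y = 0)
    (hxz : qComm t x z = (t - 1) • y ^ 2) (k : ℕ) :
    qDiscriminant t x y z ^ k =
      ∑ i ∈ Finset.range (k + 1), c k i • (x ^ (k - i) * y ^ (2 * i) * z ^ (k - i)) := by
  induction k with
  | zero => simp [hc₀]
  | succ k ih =>
    have hstep : ∀ i ∈ Finset.range (k + 1),
        qDiscriminant t x y z * (c k i • (x ^ (k - i) * y ^ (2 * i) * z ^ (k - i))) =
          (t ^ (-((k : ℤ) + i)) * c k i) • (x ^ (k + 1 - i) * y ^ (2 * i) * z ^ (k + 1 - i)) -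
            (t ^ ((i : ℤ) + 1 - k) * c k i) • (x ^ (k - i) * y ^ (2 * (i + 1)) * z ^ (k - i)) := by
      intro i hi
      rw [mul_smul_comm, qDiscriminant_mul_monomial_of_le ht hyz hxy hxz
        (Finset.mem_range_succ_iff.mp hi)]
      module
    rw [pow_succ', ih, Finset.mul_sum, Finset.sum_congr rfl hstep, Finset.sum_sub_distrib,
      Finset.sum_range_succ' _ (k + 1), Finset.sum_range_succ' _ k]
    simp only [hc_succ, hc_zero, sub_smul, Finset.sum_sub_distrib, Nat.add_sub_add_right]
    rw [Finset.sum_range_succ (fun i => (t ^ (-((k : ℤ) + (i + 1))) * c k (i + 1)) • _) k, hc_top]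
    simp only [Nat.cast_add, Nat.cast_one, Nat.cast_zero, mul_zero, zero_smul, add_zero]
    abel

end PowerExpansion

section QuantumBinomial

theorem qq_ne_zero : qq ≠ 0 := RatFunc.X_ne_zero

theorem qq_pow_ne_one {n : ℕ} (hn : n ≠ 0) : qq ^ n ≠ 1 := by
  intro h
  have hpoly : (Polynomial.X ^ n - 1 : Polynomial ℚ) ≠ 0 :=
    Polynomial.X_pow_sub_C_ne_zero (Nat.pos_of_ne_zero hn) 1
  exact RatFunc.transcendental_X (K := ℚ) ⟨_, hpoly, by simpa [sub_eq_zero, qq] using h⟩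

theorem qq_sq_add_inv_ne_zero : qq ^ 2 + (qq ^ 2)⁻¹ ≠ 0 := by
  intro h
  have h8 : qq ^ 8 = 1 := by
    have := qq_ne_zero
    field_simp at h
    linear_combination (qq ^ 4 - 1) * h
  exact qq_pow_ne_one (by norm_num) h8

theorem qq_sq_add_one_add_inv_ne_zero : qq ^ 2 + 1 + (qq ^ 2)⁻¹ ≠ 0 := by
  intro h
  have h6 : qq ^ 6 = 1 := by
    have := qq_ne_zero
    field_simp at h
    linear_combination (qq ^ 2 - 1) * h
  exact qq_pow_ne_one (by norm_num) h6

theorem qint_natCast_succ_ne_zero (n : ℕ) : qint (n + 1) ≠ 0 := by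
  have hroot : ∀ m : ℕ, m ≠ 0 → qq ^ (m : ℤ) - qq ^ (-(m : ℤ)) ≠ 0 := by
    intro m hm h
    refine qq_pow_ne_one (n := m + m) (by omega) ?_
    rw [zpow_neg, zpow_natCast, sub_eq_zero,
      ← mul_eq_one_iff_eq_inv₀ (pow_ne_zero m qq_ne_zero)] at h
    rw [pow_add, h]
  have hnum := hroot (n + 1) n.succ_ne_zero
  have hden := hroot 1 one_ne_zero
  push_cast at hnum
  rw [Nat.cast_one, zpow_one, zpow_neg_one] at hden
  exact div_ne_zero hnum hden

theorem qfact_ne_zero (i : ℕ) : qfact i ≠ 0 :=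
  Finset.prod_ne_zero_iff.mpr fun j _ => qint_natCast_succ_ne_zero j

theorem qfact_succ (i : ℕ) : qfact (i + 1) = qfact i * qint (i + 1) :=
  Finset.prod_range_succ _ i

theorem qbinom_zero_right (m : ℤ) : qbinom m 0 = 1 := by
  simp [qbinom, qfact]

theorem qbinom_natCast_succ_self (k : ℕ) : qbinom k (k + 1) = 0 := by
  simp [qbinom, Finset.prod_range_succ, qint]

theorem qint_add (a b : ℤ) : qint (a + b) = qq ^ (-b) * qint a + qq ^ a * qint b := by
  have hmul (r s : ℤ) : qq ^ (r + s) = qq ^ r * qq ^ s := zpow_add₀ qq_ne_zero r s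
  simp only [qint, neg_add, hmul]
  ring

theorem qbinom_succ_succ (m : ℤ) (i : ℕ) :
    qbinom (m + 1) (i + 1) =
      qq ^ (-((i : ℤ) + 1)) * qbinom m (i + 1) + qq ^ (m - i) * qbinom m i := by
  have hshift : ∏ j ∈ Finset.range i, qint (m + 1 - ((j + 1 : ℕ) : ℤ)) =
      ∏ j ∈ Finset.range i, qint (m - j) :=
    Finset.prod_congr rfl fun j _ => by rw [Nat.cast_add_one, add_sub_add_right_eq_sub]
  have hsplit : qint (m + 1) =
      qq ^ (-((i : ℤ) + 1)) * qint (m - i) + qq ^ (m - i) * qint (i + 1) := by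
    rw [← qint_add]
    ring_nf
  have hfact := qfact_ne_zero i
  have hint := qint_natCast_succ_ne_zero i
  rw [qbinom, qbinom, qbinom, qfact_succ, Finset.prod_range_succ', Finset.prod_range_succ, hshift,
    Nat.cast_zero, sub_zero, hsplit]
  field_simp

/-- The coefficient of `u₂ ^ (k - i) * u₁ ^ (2 * i) * u₀ ^ (k - i)` in the expansion of `p₀ ^ k`. -/
def expansionCoeff (k i : ℕ) : F :=
  (-1 : F) ^ i *
    qq ^ (2 * (i : ℤ) ^ 2 - (i : ℤ) * (k : ℤ) - (k : ℤ) ^ 2 + (i : ℤ) + (k : ℤ)) *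
    qbinom (k : ℤ) i

theorem expansionCoeff_succ_zero (k : ℕ) :
    expansionCoeff (k + 1) 0 = (qq ^ 2) ^ (-(k : ℤ)) * expansionCoeff k 0 := by
  simp only [expansionCoeff, qbinom_zero_right, pow_zero, one_mul, mul_one]
  rw [← zpow_natCast qq 2, ← zpow_mul, ← zpow_add₀ qq_ne_zero]
  congr 1
  push_cast
  ring

theorem expansionCoeff_succ_succ (k i : ℕ) :
    expansionCoeff (k + 1) (i + 1) =
      (qq ^ 2) ^ (-((k : ℤ) + (i + 1))) * expansionCoeff k (i + 1) -
        (qq ^ 2) ^ ((i : ℤ) + 1 - k) * expansionCoeff k i := by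
  have hexp {a b c d : ℤ} (h : a + b = 2 * c + d) :
      qq ^ a * qq ^ b = (qq ^ 2) ^ c * qq ^ d := by
    rw [← zpow_natCast qq 2, ← zpow_mul, ← zpow_add₀ qq_ne_zero, ← zpow_add₀ qq_ne_zero]
    exact congrArg _ h
  simp only [expansionCoeff]
  push_cast
  rw [qbinom_succ_succ, mul_add, ← mul_assoc, ← mul_assoc, mul_assoc _ (qq ^ _) (qq ^ _),
    mul_assoc _ (qq ^ _) (qq ^ _),
    hexp (c := -((k : ℤ) + (i + 1)))
      (d := 2 * ((i : ℤ) + 1) ^ 2 - (i + 1) * k - (k : ℤ) ^ 2 + (i + 1) + k) (by ring),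
    hexp (c := (i : ℤ) + 1 - k)
      (d := 2 * (i : ℤ) ^ 2 - i * k - (k : ℤ) ^ 2 + i + k) (by ring)]
  ring

end QuantumBinomial

theorem quantumSerre_E1_E2 : QuantumSerre (qq ^ 2) E1 E2 := by
  simpa only [map_sub, map_add, map_mul, map_pow, map_smul, map_zero, box3, inv_pow, E1, E2,
    QuantumSerre]
    using RingQuot.mkAlgHom_rel F SerreRel.rel1

theorem quantumSerre_E2_E1 : QuantumSerre (qq ^ 2) E2 E1 := by
  simpa only [map_sub, map_add, map_mul, map_pow, map_smul, map_zero, box3, inv_pow, E1, E2,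
    QuantumSerre]
    using RingQuot.mkAlgHom_rel F SerreRel.rel2

theorem stmt7_general {R : Type*} [Ring R] [Algebra F R] {x y : R}
    (hxy : QuantumSerre (qq ^ 2) x y) (hyx : QuantumSerre (qq ^ 2) y x) (l : F) {u : ℕ → R}
    (hu : u = iterBracket (l • imagRootVec (qq ^ 2) x y) x) (n k : ℕ) :
    (u (n + 2) * u n - qq ^ 2 • u (n + 1) ^ 2) ^ k =
      ∑ i ∈ Finset.range (k + 1),
        ((-1 : F) ^ i *
            qq ^ (2 * (i : ℤ) ^ 2 - (i : ℤ) * (k : ℤ) - (k : ℤ) ^ 2 + (i : ℤ) + (k : ℤ)) *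
            qbinom (k : ℤ) i) •
          (u (n + 2) ^ (k - i) * u (n + 1) ^ (2 * i) * u n ^ (k - i)) := by
  have : IsAddTorsionFree R := .of_isTorsionFree F R
  have hrel (m : ℕ) : currentRel (qq ^ 2) u m m = 0 :=
    hu ▸ currentRel_iterBracket_imagRootVec_eq_zero (pow_ne_zero 2 qq_ne_zero)
      qq_sq_add_inv_ne_zero qq_sq_add_one_add_inv_ne_zero hxy hyx l m
  have hlie (m : ℕ) : ⁅l • imagRootVec (qq ^ 2) x y, u m⁆ = u (m + 1) := hu ▸ lie_iterBracket _ x m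
  exact qDiscriminant_pow_of_recurrence (c := expansionCoeff)
    (by simp [expansionCoeff, qbinom_zero_right])
    (fun k => by rw [expansionCoeff, qbinom_natCast_succ_self, mul_zero])
    expansionCoeff_succ_zero expansionCoeff_succ_succ (pow_ne_zero 2 qq_ne_zero)
    (qComm_succ_of_currentRel_eq_zero (hrel n)) (qComm_succ_of_currentRel_eq_zero (hrel (n + 1)))
    (qComm_add_two_of_currentRel_eq_zero (currentRel_add_self_eq_zero hlie (hrel n))) k

/-- The sequence of real root vectors `uₙ = (1 - q⁻²)⁻²ⁿ ad(A)ⁿ E₁`, extending `u0, u1, u2, u3`; the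
scalar `(1 - q⁻²)⁻²` is absorbed into `A`. -/
def uSeq : ℕ → U :=
  iterBracket ((((1 - qq⁻¹ ^ 2)⁻¹) ^ 2 * (qq + qq⁻¹)⁻¹) • imagRootVec (qq ^ 2) E1 E2) E1

theorem uSeq_eq (n : ℕ) :
    uSeq n = ((1 - qq⁻¹ ^ 2)⁻¹) ^ (2 * n) • iterBracket Aelt E1 n := by
  rw [uSeq, mul_smul, iterBracket_smul, ← pow_mul, imagRootVec, qComm, ← inv_pow]
  rfl

/-- In `U`, for every natural number `k` the power expansions
`p₁^k = Σ_{i=0}^{k} (−1)^i q^{2i² − ik − k² + i + k} [k;i] u₃^{k−i}u₂^{2i}u₁^{k−i}` and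
`p₀^k = Σ_{i=0}^{k} (−1)^i q^{2i² − ik − k² + i + k} [k;i] u₂^{k−i}u₁^{2i}u₀^{k−i}` hold. -/
theorem stmt7 (k : ℕ) :
    p1 ^ k = ∑ i ∈ Finset.range (k + 1),
        ((-1 : F) ^ i *
            qq ^ (2 * (i : ℤ) ^ 2 - (i : ℤ) * (k : ℤ) - (k : ℤ) ^ 2 + (i : ℤ) + (k : ℤ)) *
            qbinom (k : ℤ) i) •
          (u3 ^ (k - i) * u2 ^ (2 * i) * u1 ^ (k - i)) ∧
    p0 ^ k = ∑ i ∈ Finset.range (k + 1),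
        ((-1 : F) ^ i *
            qq ^ (2 * (i : ℤ) ^ 2 - (i : ℤ) * (k : ℤ) - (k : ℤ) ^ 2 + (i : ℤ) + (k : ℤ)) *
            qbinom (k : ℤ) i) •
          (u2 ^ (k - i) * u1 ^ (2 * i) * u0 ^ (k - i)) := by
  have hu₀ : uSeq 0 = u0 := rfl
  have hu₁ : uSeq 1 = u1 := uSeq_eq 1
  have hu₂ : uSeq 2 = u2 := uSeq_eq 2
  have hu₃ : uSeq 3 = u3 := uSeq_eq 3
  rw [p1, p0, ← hu₀, ← hu₁, ← hu₂, ← hu₃]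
  exact ⟨stmt7_general quantumSerre_E1_E2 quantumSerre_E2_E1 _ rfl 1 k,
    stmt7_general quantumSerre_E1_E2 quantumSerre_E2_E1 _ rfl 0 k⟩
end
end
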